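/- Let d ≥ 2 be an integer, γ > 1 a real number, c = γ − d − 1, and suppose p, r, ν, κ satisfy: p > 1, r > 1, 1/r = 2/p + (2ν+κ)/d − 1, κ < d/r, ((d−1)/2)(1 − 2/p) < ν < d(p−1)/p, 2r ≥ p, max{ν,κ} > 0, ν + κ ≥ (d−1)(1/r − 1/p), max{0, d + p(c+ν)} < d(r−p)/r + p(ν+κ+1) < γ p (r−1)/r, γ p (r−1)/r − d(r−p)/r − p(ν+κ+1) > γ, and p > r/(r−1). Set m = p(r−1)/r − (p/γ)(κ+1+ν) − d(r−p)/(rγ). Fix β ∈ (0,1) and let A > 0 be such that the ball condition ‖θ̂‖_{u_ν,p} ≤ A on radial bounds is R_β-invariant. Then there exists M > 0 such that the convex set E^M = {ϑ ∈ RL^p_{u_ν} : ϑ admits a radial bound θ̂ with ‖θ̂‖_{u_ν,p} ≤ A, and (∫_{|η|>ρ} |ϑ(η)|^p u_ν(η)^p dη)^{1/p} ≤ M ρ^{−γm/p} for all ρ > β} is invariant under R_β. -/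

import Mathlib

/-!
On the tail `|η| ≥ β` the operator `R_β` gains powers of `|η|`, uniformly over the whole ball of
radial bounds. For `0 ≤ θ < 1` the factor `e^{|η|^γ (1 - t^γ)}` is at most
`|η|^{-γθ} (t - 1)^{-θ}`, which trades the singularity at `t = 1`, still integrable, for the decay
`|η|^{-γθ}`. If `y + z = tη` with `|y| ≤ |z|`, then `|z|` is comparable to `|η|` up to a factor that
the exponential weights absorb, so that `u_ν(η)` is at most `e^{|y|} u_ν(z)` up to a constant; the
part `|η|^{-σ}` of the gained decay is transferred to `(1 + |y|)^{-σ}`, and Hölder's inequality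
bounds `e^{|y|} (1 + |y|)^{-σ} |ϑ(y)|` in `L¹` by the `u_ν`-norm of `ϑ`. The nonlinear part of
`R_β[ϑ]` is thus dominated by an average over `t` of dilated convolutions of an `L¹` with an `L^p`
function, and Minkowski's and Young's inequalities bound `|η|^{γm/p} u_ν(η) R_β[ϑ](η)` in `L^p` on
the tail. Chebyshev's inequality turns this into the tail bound. The exponents fit because the
scaling relation gives `γm/p = γ(1 - 1/r) - 1 + ν - d(p - 1)/p`, strictly below the threshold that
`θ < 1` imposes.
-/

open MeasureTheory Set RealInnerProductSpace
open scoped ENNReal NNReal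

noncomputable section

/-- `ℝ^d` with the Euclidean norm. -/
abbrev Ed (d : ℕ) := EuclideanSpace ℝ (Fin d)

/-- `ℂ^d` with the Euclidean norm. -/
abbrev EdC (d : ℕ) := EuclideanSpace ℂ (Fin d)

/-- A function on `ℝ^d` is radial if its value depends only on the norm of the argument. -/
def IsRadial {d : ℕ} {α : Type*} (f : Ed d → α) : Prop :=
  ∀ x y : Ed d, ‖x‖ = ‖y‖ → f x = f y

/-- The pairing `⟨η, v⟩` of a real vector with a complex vector, extended ℂ-bilinearly. -/
def pairC {d : ℕ} (η : Ed d) (v : EdC d) : ℂ := ∑ i, (η i : ℂ) * v i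

/-- The Leray projection `P_η v = v − (⟨v,η⟩/|η|²) η`, extended ℂ-bilinearly. -/
def lerayC {d : ℕ} (η : Ed d) (v : EdC d) : EdC d :=
  (WithLp.equiv 2 (Fin d → ℂ)).symm
    (fun i => v i - (pairC η v / ((‖η‖ ^ 2 : ℝ) : ℂ)) * (η i : ℂ))

/-- The integrand of the nonlinear part of the renormalization operator (complex fields). -/
def renormKernelC (d : ℕ) (γ : ℝ) (ϑ : Ed d → EdC d) (η : Ed d) (t : ℝ) (x : Ed d) : EdC d :=
  (t ^ (-(γ - d - 1)) * Real.exp (‖η‖ ^ γ * (1 - t ^ γ))) •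
    (pairC η (ϑ (t • η - x)) • lerayC η (ϑ x))

/-- Absolute convergence of the integrals defining `R_β[ϑ](η)` (complex fields). -/
def RenormDefinedC (d : ℕ) (γ β : ℝ) (ϑ : Ed d → EdC d) (η : Ed d) : Prop :=
  IntegrableOn (fun q : ℝ × Ed d => renormKernelC d γ ϑ η q.1 q.2)
    (Set.Ioc (1 : ℝ) β⁻¹ ×ˢ Set.univ)

/-- The renormalization operator `R_β` on complex vector fields. -/
def renormC (d : ℕ) (γ β : ℝ) (ϑ : Ed d → EdC d) (η : Ed d) : EdC d :=
  (β ^ (γ - d - 1) * Real.exp (‖η‖ ^ γ * (1 - β ^ (-γ)))) • ϑ (β⁻¹ • η)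
    + (Complex.I * (γ : ℂ)) •
        ∫ t in Set.Ioc (1 : ℝ) β⁻¹, ∫ x : Ed d, renormKernelC d γ ϑ η t x

/-- The Leray projection `P_η v = v − (⟨v,η⟩/|η|²) η` for real vector fields. -/
def lerayR {d : ℕ} (η v : Ed d) : Ed d := v - (⟪v, η⟫ / ‖η‖ ^ 2) • η

/-- The integrand of the nonlinear part of the renormalization operator (real fields). -/
def renormKernelR (d : ℕ) (γ : ℝ) (ψ : Ed d → Ed d) (η : Ed d) (t : ℝ) (x : Ed d) : Ed d :=
  (t ^ (-(γ - d - 1)) * Real.exp (‖η‖ ^ γ * (1 - t ^ γ))) •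
    (⟪η, ψ (t • η - x)⟫ • lerayR η (ψ x))

/-- Absolute convergence of the integrals defining `R_β[ψ](η)` (real fields). -/
def RenormDefinedR (d : ℕ) (γ β : ℝ) (ψ : Ed d → Ed d) (η : Ed d) : Prop :=
  IntegrableOn (fun q : ℝ × Ed d => renormKernelR d γ ψ η q.1 q.2)
    (Set.Ioc (1 : ℝ) β⁻¹ ×ˢ Set.univ)

/-- The renormalization operator `R_β` on real vector fields. -/
def renormR (d : ℕ) (γ β : ℝ) (ψ : Ed d → Ed d) (η : Ed d) : Ed d :=
  (β ^ (γ - d - 1) * Real.exp (‖η‖ ^ γ * (1 - β ^ (-γ)))) • ψ (β⁻¹ • η)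
    - γ • ∫ t in Set.Ioc (1 : ℝ) β⁻¹, ∫ x : Ed d, renormKernelR d γ ψ η t x

/-- First coordinate (`x_{d-1}`) of the projection onto the azimuthal plane. -/
def azim1 {d : ℕ} (x : Ed d) : ℝ := if h : d - 2 < d then x ⟨d - 2, h⟩ else 0

/-- Second coordinate (`x_d`) of the projection onto the azimuthal plane. -/
def azim2 {d : ℕ} (x : Ed d) : ℝ := if h : d - 1 < d then x ⟨d - 1, h⟩ else 0

/-- The norm `|x_a|` of the azimuthal projection. -/
def normA {d : ℕ} (x : Ed d) : ℝ := Real.sqrt (azim1 x ^ 2 + azim2 x ^ 2)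

/-- `cos∠_η(x) = ⟨x_a, η_a⟩ / (|x_a| |η_a|)`. -/
def cosAng {d : ℕ} (η x : Ed d) : ℝ :=
  (azim1 x * azim1 η + azim2 x * azim2 η) / (normA x * normA η)

/-- `sin∠_η(x) = (η_{d−1} x_d − η_d x_{d−1}) / (|x_a| |η_a|)`. -/
def sinAng {d : ℕ} (η x : Ed d) : ℝ :=
  (azim1 η * azim2 x - azim2 η * azim1 x) / (normA x * normA η)

/-- The integrand of the nonlinear part of the azimuthal renormalization operator. -/
def aKernel (d : ℕ) (γ : ℝ) (ψ : Ed d → ℝ) (η : Ed d) (t : ℝ) (x : Ed d) : ℝ :=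
  t ^ (-(γ - d - 1)) * Real.exp (‖η‖ ^ γ * (1 - t ^ γ)) *
    (ψ x * ψ (t • η - x) * cosAng η x * sinAng η (t • η - x))

/-- Absolute convergence of the integrals defining the azimuthal `R_β[ψ](η)`. -/
def ARenormDefined (d : ℕ) (γ β : ℝ) (ψ : Ed d → ℝ) (η : Ed d) : Prop :=
  IntegrableOn (fun q : ℝ × Ed d => aKernel d γ ψ η q.1 q.2)
    (Set.Ioc (1 : ℝ) β⁻¹ ×ˢ Set.univ)

/-- The azimuthal renormalization operator `R_β` on scalar functions. -/
def arenorm (d : ℕ) (γ β : ℝ) (ψ : Ed d → ℝ) (η : Ed d) : ℝ :=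
  β ^ (γ - d - 1) * Real.exp (‖η‖ ^ γ * (1 - β ^ (-γ))) * ψ (β⁻¹ • η)
    + γ * normA η * ∫ t in Set.Ioc (1 : ℝ) β⁻¹, ∫ x : Ed d, aKernel d γ ψ η t x

/-- Weighted `L^p` norm `(∫ |f|^p w^p)^{1/p}` of a scalar function, valued in `ℝ≥0∞`. -/
def wLpNorm {d : ℕ} (w : Ed d → ℝ) (p : ℝ) (f : Ed d → ℝ) : ℝ≥0∞ :=
  (∫⁻ x : Ed d, ENNReal.ofReal (|f x| ^ p * w x ^ p)) ^ (1 / p)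

/-- Weighted `L^p` norm of a `ℂ^d`-valued function, valued in `ℝ≥0∞`. -/
def wLpNormC {d : ℕ} (w : Ed d → ℝ) (p : ℝ) (f : Ed d → EdC d) : ℝ≥0∞ :=
  (∫⁻ x : Ed d, ENNReal.ofReal (‖f x‖ ^ p * w x ^ p)) ^ (1 / p)

/-- The weight `u_ν(x) = e^{|x|} |x|^ν`. -/
def uWeight (ν : ℝ) {d : ℕ} (x : Ed d) : ℝ := Real.exp ‖x‖ * ‖x‖ ^ ν

/-- The weight `v_ν(x) = e^{(b/2)|x|} |x|^ν`. -/
def vWeight (b ν : ℝ) {d : ℕ} (x : Ed d) : ℝ := Real.exp (b / 2 * ‖x‖) * ‖x‖ ^ ν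

/-- Membership in `RL^p_{u_ν}`: fields dominated a.e. by a radial function in `L^p_{u_ν}`. -/
def MemRL (d : ℕ) (p ν : ℝ) (ϑ : Ed d → EdC d) : Prop :=
  AEStronglyMeasurable ϑ volume ∧ ∃ g : Ed d → ℝ, Measurable g ∧ IsRadial g ∧
    wLpNorm (uWeight ν) p g < ⊤ ∧ ∀ᵐ x : Ed d, ‖ϑ x‖ ≤ g x

/-- Membership in `RL^p_{u_ν}` with a radial bound of norm at most `A`. -/
def MemRLBall (d : ℕ) (p ν A : ℝ) (ϑ : Ed d → EdC d) : Prop :=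
  AEStronglyMeasurable ϑ volume ∧ ∃ g : Ed d → ℝ, Measurable g ∧ IsRadial g ∧
    wLpNorm (uWeight ν) p g ≤ ENNReal.ofReal A ∧ ∀ᵐ x : Ed d, ‖ϑ x‖ ≤ g x

/-- Membership in the set `M` of functions bounded by `k |η|^σ e^{−b|η|}`. -/
def memM {d : ℕ} (k b σ : ℝ) (ψ : Ed d → ℝ) : Prop :=
  Measurable ψ ∧
    ∀ᵐ η : Ed d, η ≠ 0 → |ψ η| < k * ‖η‖ ^ σ * Real.exp (-b * ‖η‖)

/-- Inclusion of a real vector into `ℂ^d`. -/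
def toC {d : ℕ} (v : Ed d) : EdC d :=
  (WithLp.equiv 2 (Fin d → ℂ)).symm (fun i => (v i : ℂ))

/-- The azimuthal unit vector field `e_{d−1}(y) = (0,…,0,−y_d,y_{d−1})/|y_a|`. -/
def azVec (d : ℕ) (y : Ed d) : Ed d :=
  (WithLp.equiv 2 (Fin d → ℝ)).symm (fun i =>
    if (i : ℕ) = d - 2 then -azim2 y / normA y
    else if (i : ℕ) = d - 1 then azim1 y / normA y
    else 0)

/-- The Leray self-similar ansatz
`v_*(y,t) = i (T−t)^{(d+1−γ)/γ} ψ(y (T−t)^{1/γ}) e_{d−1}(y)`. -/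
def vfun (d : ℕ) (γ : ℝ) (ψ : Ed d → ℝ) (T : ℝ) (y : Ed d) (t : ℝ) : EdC d :=
  (Complex.I *
      ((((T - t) ^ (((d : ℝ) + 1 - γ) / γ) * ψ (((T - t) ^ (1 / γ)) • y)) : ℝ) : ℂ)) •
    toC (azVec d y)

end

/-- The equitightness (tail) bound: `(∫_{|η|>ρ} |ϑ|^p u_ν^p)^{1/p} ≤ M ρ^{−γm/p}`
for all `ρ > β`. -/
def tailBound (d : ℕ) (p ν γ m M β : ℝ) (ϑ : Ed d → EdC d) : Prop :=
  ∀ ρ : ℝ, β < ρ →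
    (∫⁻ η in {η : Ed d | ρ < ‖η‖}, ENNReal.ofReal (‖ϑ η‖ ^ p * uWeight ν η ^ p)) ^ (1 / p) ≤
      ENNReal.ofReal (M * ρ ^ (-(γ * m / p)))

section RealEstimates

theorem rpow_mul_exp_neg_mul_le {b q x : ℝ} (hb : 0 ≤ b) (hq : 0 < q) (hx : 0 ≤ x) :
    x ^ b * Real.exp (-(q * x)) ≤ (b / q) ^ b := by
  rcases hb.eq_or_lt with rfl | hb
  · simpa using mul_nonneg hq.le hx
  have hx_le : x ≤ b / q * Real.exp (q * x / b) := by
    calc x = b / q * (q * x / b) := by field_simp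
      _ ≤ b / q * Real.exp (q * x / b) := by
        gcongr
        linarith [Real.add_one_le_exp (q * x / b)]
  calc x ^ b * Real.exp (-(q * x))
      ≤ (b / q * Real.exp (q * x / b)) ^ b * Real.exp (-(q * x)) := by gcongr
    _ = (b / q) ^ b * (Real.exp (q * x) * Real.exp (-(q * x))) := by
        rw [Real.mul_rpow (by positivity) (by positivity), ← Real.exp_mul,
          div_mul_cancel₀ _ hb.ne', mul_assoc]
    _ = (b / q) ^ b := by rw [← Real.exp_add, add_neg_cancel, Real.exp_zero, mul_one]

theorem rpow_le_rpow_abs_mul_rpow {x y K : ℝ} (hx : 0 < x) (hy : 0 < y) (hxy : x ≤ K * y)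
    (hyx : y ≤ K * x) (a : ℝ) : x ^ a ≤ K ^ |a| * y ^ a := by
  have hK : 0 < K := pos_of_mul_pos_left (hx.trans_le hxy) hy.le
  rcases le_total 0 a with ha | ha
  · rw [abs_of_nonneg ha, ← Real.mul_rpow hK.le hy.le]
    exact Real.rpow_le_rpow hx.le hxy ha
  · rw [abs_of_nonpos ha, Real.rpow_neg hK.le, inv_mul_eq_div, le_div_iff₀' (by positivity),
      ← Real.mul_rpow hK.le hx.le]
    exact Real.rpow_le_rpow_of_nonpos hy hyx ha

/- The ratio of `N` and `Z` is at most of order `1 + D` with `D = Y + Z - N`, and any power of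
`1 + D` is absorbed by `exp D`. -/
theorem exists_rpow_mul_exp_le {β : ℝ} (hβ : 0 < β) (a : ℝ) :
    ∃ C : ℝ, 0 ≤ C ∧ ∀ N Y Z : ℝ, β ≤ N → 0 ≤ Y → Y ≤ Z → N ≤ Y + Z →
      N ^ a * Real.exp N ≤ C * (Z ^ a * Real.exp (Y + Z)) := by
  refine ⟨(2 + β⁻¹) ^ |a| * (|a| ^ |a| * Real.exp 1), by positivity, fun N Y Z hN hY hYZ hNYZ => ?_⟩
  have hN₀ : 0 < N := hβ.trans_le hN
  have hZ : 0 < Z := by linarith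
  have hβN : 1 ≤ β⁻¹ * N := by rwa [inv_mul_eq_div, one_le_div hβ]
  obtain ⟨D, hD⟩ : ∃ D, D = Y + Z - N := ⟨_, rfl⟩
  have hD₀ : 0 ≤ D := by linarith
  have hβ' : 0 < β⁻¹ := inv_pos.2 hβ
  have hratio : N ^ a ≤ ((2 + β⁻¹) * (1 + D)) ^ |a| * Z ^ a := by
    refine rpow_le_rpow_abs_mul_rpow hN₀ hZ ?_ ?_ a
    · nlinarith [mul_nonneg hβ'.le hZ.le, mul_nonneg hD₀ hZ.le,
        mul_nonneg (mul_nonneg hβ'.le hD₀) hZ.le]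
    · nlinarith [mul_nonneg hD₀ hN₀.le, mul_nonneg hD₀ (sub_nonneg.2 hβN)]
  have habsorb : (1 + D) ^ |a| ≤ |a| ^ |a| * Real.exp (1 + D) := by
    have h := rpow_mul_exp_neg_mul_le (abs_nonneg a) one_pos (by linarith : 0 ≤ 1 + D)
    rwa [one_mul, div_one, Real.exp_neg, mul_inv_le_iff₀ (Real.exp_pos _)] at h
  calc N ^ a * Real.exp N
      ≤ ((2 + β⁻¹) * (1 + D)) ^ |a| * Z ^ a * Real.exp N := by gcongr
    _ = (2 + β⁻¹) ^ |a| * (1 + D) ^ |a| * Z ^ a * Real.exp N := by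
        rw [Real.mul_rpow (by positivity) (by positivity)]
    _ ≤ (2 + β⁻¹) ^ |a| * (|a| ^ |a| * Real.exp (1 + D)) * Z ^ a * Real.exp N := by gcongr
    _ = (2 + β⁻¹) ^ |a| * (|a| ^ |a| * Real.exp 1) * (Z ^ a * Real.exp (Y + Z)) := by
        rw [show Y + Z = D + N by linarith, Real.exp_add, Real.exp_add]
        ring

theorem exists_rpow_sub_mul_exp_le {β σ : ℝ} (hβ : 0 < β) (hσ : 0 ≤ σ) (ν : ℝ) :
    ∃ C : ℝ, 0 ≤ C ∧ ∀ N Y Z : ℝ, β ≤ N → 0 ≤ Y → Y ≤ Z → N ≤ Y + Z →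
      N ^ (ν - σ) * Real.exp N
        ≤ C * (Real.exp Y * (1 + Y) ^ (-σ)) * (Real.exp Z * Z ^ ν) := by
  obtain ⟨C, hC, hbound⟩ := exists_rpow_mul_exp_le hβ (ν - σ)
  refine ⟨C * (1 + 2 / β) ^ σ, by positivity, fun N Y Z hN hY hYZ hNYZ => ?_⟩
  have hZ : 0 < Z := by linarith
  have hZ_large : 1 ≤ 2 / β * Z := by
    rw [div_mul_eq_mul_div, one_le_div hβ]
    linarith
  have hlow : Z ^ (-σ) ≤ (1 + 2 / β) ^ σ * (1 + Y) ^ (-σ) := by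
    rw [Real.rpow_neg hZ.le, Real.rpow_neg (by positivity), inv_le_iff_one_le_mul₀ (by positivity),
      ← div_eq_mul_inv, div_mul_eq_mul_div, ← Real.mul_rpow (by positivity) hZ.le,
      one_le_div (by positivity)]
    exact Real.rpow_le_rpow (by positivity) (by linarith) hσ
  calc N ^ (ν - σ) * Real.exp N
      ≤ C * (Z ^ (ν - σ) * Real.exp (Y + Z)) := hbound N Y Z hN hY hYZ hNYZ
    _ = C * (Z ^ ν * Z ^ (-σ) * Real.exp (Y + Z)) := by rw [← Real.rpow_add hZ, sub_eq_add_neg]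
    _ ≤ C * (Z ^ ν * ((1 + 2 / β) ^ σ * (1 + Y) ^ (-σ)) * Real.exp (Y + Z)) := by gcongr
    _ = C * (1 + 2 / β) ^ σ * (Real.exp Y * (1 + Y) ^ (-σ)) * (Real.exp Z * Z ^ ν) := by
        rw [Real.exp_add]
        ring

theorem rpow_mul_exp_rpow_mul_one_sub_le {N γ b k : ℝ} (hN : 0 ≤ N) (hb : 0 ≤ b) (hk : 1 < k) :
    N ^ (γ * b) * Real.exp (N ^ γ * (1 - k)) ≤ (b / (k - 1)) ^ b := by
  have h := rpow_mul_exp_neg_mul_le hb (sub_pos.2 hk) (Real.rpow_nonneg hN γ)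
  rwa [← Real.rpow_mul hN, ← mul_neg_one, mul_right_comm, mul_neg_one, neg_sub, mul_comm (1 - k)]
    at h

theorem rpow_mul_exp_rpow_mul_one_sub_rpow_le {N γ θ t : ℝ} (hN : 0 ≤ N) (hγ : 1 ≤ γ)
    (hθ₀ : 0 ≤ θ) (hθ₁ : θ ≤ 1) (ht : 1 < t) :
    N ^ (γ * θ) * Real.exp (N ^ γ * (1 - t ^ γ)) ≤ (t - 1) ^ (-θ) := by
  have ht' : 0 < t - 1 := sub_pos.2 ht
  have hpow : t ≤ t ^ γ := by simpa using Real.rpow_le_rpow_of_exponent_le ht.le hγ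
  calc N ^ (γ * θ) * Real.exp (N ^ γ * (1 - t ^ γ))
      ≤ N ^ (γ * θ) * Real.exp (N ^ γ * (1 - t)) := by gcongr
    _ ≤ (θ / (t - 1)) ^ θ := rpow_mul_exp_rpow_mul_one_sub_le hN hθ₀ ht
    _ ≤ (1 / (t - 1)) ^ θ := by gcongr
    _ = (t - 1) ^ (-θ) := by rw [one_div, Real.inv_rpow ht'.le, Real.rpow_neg ht'.le]

theorem exists_kernel_weight_le {β γ θ s σ : ℝ} (hβ : 0 < β) (hγ : 1 ≤ γ) (hθ₀ : 0 ≤ θ)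
    (hθ₁ : θ ≤ 1) (hσ : 0 ≤ σ) (hs : s + 1 + σ = γ * θ) (ν c : ℝ) :
    ∃ C : ℝ, 0 ≤ C ∧ ∀ N t Y Z : ℝ, β ≤ N → t ∈ Ioc 1 β⁻¹ → 0 ≤ Y → Y ≤ Z → t * N ≤ Y + Z →
      N ^ s * (Real.exp N * N ^ ν) * (t ^ c * Real.exp (N ^ γ * (1 - t ^ γ)) * N)
        ≤ C * (t - 1) ^ (-θ) * (Real.exp Y * (1 + Y) ^ (-σ)) * (Real.exp Z * Z ^ ν) := by
  obtain ⟨C, hC, hbound⟩ := exists_rpow_sub_mul_exp_le hβ hσ ν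
  refine ⟨β⁻¹ ^ |c| * C, by positivity, fun N t Y Z hN ht hY hYZ htN => ?_⟩
  have hN₀ : 0 < N := hβ.trans_le hN
  have ht₁ : 0 < t - 1 := sub_pos.2 ht.1
  have hN_le : N ≤ Y + Z := (le_mul_of_one_le_left hN₀.le ht.1.le).trans htN
  have ht_rpow : t ^ c ≤ β⁻¹ ^ |c| := by
    simpa using rpow_le_rpow_abs_mul_rpow (K := β⁻¹) (by linarith) one_pos (by simpa using ht.2)
      (by nlinarith [ht.2]) c
  have hN_rpow : N ^ s * N ^ ν * N = N ^ (γ * θ) * N ^ (ν - σ) := by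
    rw [← Real.rpow_add hN₀, ← Real.rpow_add hN₀, ← Real.rpow_add_one hN₀.ne', ← hs]
    ring_nf
  have htime := rpow_mul_exp_rpow_mul_one_sub_rpow_le hN₀.le hγ hθ₀ hθ₁ ht.1
  have hspace := hbound N Y Z hN hY hYZ hN_le
  calc N ^ s * (Real.exp N * N ^ ν) * (t ^ c * Real.exp (N ^ γ * (1 - t ^ γ)) * N)
      = N ^ s * N ^ ν * N * Real.exp N * t ^ c * Real.exp (N ^ γ * (1 - t ^ γ)) := by ring
    _ = t ^ c * (N ^ (γ * θ) * Real.exp (N ^ γ * (1 - t ^ γ)))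
          * (N ^ (ν - σ) * Real.exp N) := by
        rw [hN_rpow]
        ring
    _ ≤ β⁻¹ ^ |c| * (t - 1) ^ (-θ)
          * (C * (Real.exp Y * (1 + Y) ^ (-σ)) * (Real.exp Z * Z ^ ν)) := by gcongr
    _ = β⁻¹ ^ |c| * C * (t - 1) ^ (-θ) * (Real.exp Y * (1 + Y) ^ (-σ))
          * (Real.exp Z * Z ^ ν) := by ring

end RealEstimates

section PowerIntegrals

theorem integrableOn_Ioi_rpow_mul_one_add_rpow {a b : ℝ} (ha : -1 < a) (hab : a + b < -1) :
    IntegrableOn (fun s : ℝ => s ^ a * (1 + s) ^ b) (Ioi 0) := by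
  have hb : b ≤ 0 := by linarith
  have hmeas : Measurable fun s : ℝ => s ^ a * (1 + s) ^ b := by fun_prop
  rw [← Ioc_union_Ioi_eq_Ioi (zero_le_one (α := ℝ))]
  refine IntegrableOn.union ?_ ?_
  · have hnear : IntegrableOn (fun s : ℝ => s ^ a) (Ioc 0 1) := by
      rw [← intervalIntegrable_iff_integrableOn_Ioc_of_le zero_le_one]
      exact intervalIntegral.intervalIntegrable_rpow' ha
    refine hnear.mono' hmeas.aestronglyMeasurable ?_
    filter_upwards [ae_restrict_mem measurableSet_Ioc] with s hs
    have hs₀ : 0 < s := hs.1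
    rw [Real.norm_of_nonneg (by positivity)]
    exact mul_le_of_le_one_right (by positivity)
      (Real.rpow_le_one_of_one_le_of_nonpos (by linarith) hb)
  · refine (integrableOn_Ioi_rpow_of_lt hab one_pos).mono' hmeas.aestronglyMeasurable ?_
    filter_upwards [ae_restrict_mem measurableSet_Ioi] with s hs
    have hs₀ : 0 < s := one_pos.trans hs
    rw [Real.norm_of_nonneg (by positivity), Real.rpow_add hs₀]
    gcongr ?_ * ?_
    exact Real.rpow_le_rpow_of_nonpos hs₀ (by linarith) hb

theorem integrable_norm_rpow_mul_one_add_norm_rpow {E : Type*} [NormedAddCommGroup E]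
    [NormedSpace ℝ E] [FiniteDimensional ℝ E] [Nontrivial E] [MeasurableSpace E] [BorelSpace E]
    (μ : Measure E) [μ.IsAddHaarMeasure] {a b : ℝ} (ha : -(Module.finrank ℝ E : ℝ) < a)
    (hab : a + b < -(Module.finrank ℝ E : ℝ)) :
    Integrable (fun y : E => ‖y‖ ^ a * (1 + ‖y‖) ^ b) μ := by
  rw [integrable_fun_norm_addHaar μ (f := fun s : ℝ => s ^ a * (1 + s) ^ b)]
  have hdim : 1 ≤ Module.finrank ℝ E := Module.finrank_pos
  refine (integrableOn_Ioi_rpow_mul_one_add_rpow (a := (Module.finrank ℝ E - 1 : ℝ) + a) (b := b)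
    (by linarith) (by linarith)).congr_fun (fun s hs => ?_) measurableSet_Ioi
  have hs₀ : 0 < s := hs
  dsimp only
  rw [Real.rpow_add hs₀, ← Nat.cast_one, ← Nat.cast_sub hdim, Real.rpow_natCast, smul_eq_mul,
    mul_assoc, Nat.cast_one]

theorem lintegral_Ioc_sub_one_rpow_lt_top {θ b : ℝ} (hθ : θ < 1) (hb : 1 ≤ b) :
    ∫⁻ t in Ioc 1 b, ENNReal.ofReal ((t - 1) ^ (-θ)) < ⊤ := by
  have h := (intervalIntegral.intervalIntegrable_rpow' (a := 0) (b := b - 1)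
    (by linarith : -1 < -θ)).comp_sub_right 1
  rw [zero_add, sub_add_cancel, intervalIntegrable_iff_integrableOn_Ioc_of_le hb] at h
  exact Integrable.lintegral_lt_top h

end PowerIntegrals

section Lebesgue

variable {α δ : Type*} [MeasurableSpace α] [MeasurableSpace δ] {μ : Measure α} {τ : Measure δ}
  {p : ℝ}

theorem rpow_lintegral_rpow_const_mul (hp : 0 < p) {c : ℝ≥0∞} (hc : c ≠ ⊤) (f : α → ℝ≥0∞) :
    (∫⁻ x, (c * f x) ^ p ∂μ) ^ (1 / p) = c * (∫⁻ x, f x ^ p ∂μ) ^ (1 / p) := by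
  simp_rw [ENNReal.mul_rpow_of_nonneg _ _ hp.le]
  rw [lintegral_const_mul' _ _ (ENNReal.rpow_ne_top_of_nonneg hp.le hc),
    ENNReal.mul_rpow_of_nonneg _ _ (by positivity), ← ENNReal.rpow_mul,
    mul_one_div_cancel hp.ne', ENNReal.rpow_one]

theorem rpow_lintegral_le (hp : 1 ≤ p) {f : α → ℝ≥0∞} (hf : AEMeasurable f μ) :
    (∫⁻ x, f x ∂μ) ^ p ≤ μ univ ^ (p - 1) * ∫⁻ x, f x ^ p ∂μ := by
  have hp₀ : 0 < p := by linarith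
  have h := eLpNorm'_le_eLpNorm'_mul_rpow_measure_univ one_pos hp hf.aestronglyMeasurable
  simp only [eLpNorm', enorm_eq_self, ENNReal.rpow_one, div_one] at h
  calc (∫⁻ x, f x ∂μ) ^ p
      ≤ ((∫⁻ x, f x ^ p ∂μ) ^ (1 / p) * μ univ ^ (1 - 1 / p)) ^ p := by gcongr
    _ = (∫⁻ x, f x ^ p ∂μ) * μ univ ^ (p - 1) := by
        rw [ENNReal.mul_rpow_of_nonneg _ _ hp₀.le, ← ENNReal.rpow_mul, ← ENNReal.rpow_mul,
          one_div_mul_cancel hp₀.ne', ENNReal.rpow_one, sub_mul, one_div_mul_cancel hp₀.ne',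
          one_mul]
    _ = μ univ ^ (p - 1) * ∫⁻ x, f x ^ p ∂μ := mul_comm _ _

theorem lintegral_rpow_lintegral_le [SFinite μ] [SFinite τ] (hp : 1 ≤ p) {f : α → δ → ℝ≥0∞}
    (hf : Measurable (Function.uncurry f)) {B : ℝ≥0∞}
    (hB : ∀ᵐ t ∂τ, ∫⁻ x, f x t ^ p ∂μ ≤ B) :
    ∫⁻ x, (∫⁻ t, f x t ∂τ) ^ p ∂μ ≤ τ univ ^ p * B := by
  have hfp : Measurable fun z : α × δ => f z.1 z.2 ^ p := hf.pow_const p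
  calc ∫⁻ x, (∫⁻ t, f x t ∂τ) ^ p ∂μ
      ≤ ∫⁻ x, τ univ ^ (p - 1) * ∫⁻ t, f x t ^ p ∂τ ∂μ :=
        lintegral_mono fun x => rpow_lintegral_le hp (hf.of_uncurry_left).aemeasurable
    _ = τ univ ^ (p - 1) * ∫⁻ t, ∫⁻ x, f x t ^ p ∂μ ∂τ := by
        rw [lintegral_const_mul _ hfp.lintegral_prod_right',
          lintegral_lintegral_swap hfp.aemeasurable]
    _ ≤ τ univ ^ (p - 1) * ∫⁻ _, B ∂τ := mul_le_mul_right (lintegral_mono_ae hB) _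
    _ = τ univ ^ p * B := by
        rw [lintegral_const, mul_left_comm, mul_comm B]
        nth_rw 2 [← ENNReal.rpow_one (τ univ)]
        rw [← ENNReal.rpow_add_of_nonneg _ _ (by linarith) zero_le_one, sub_add_cancel]

theorem lintegral_le_two_mul_of_le_or_le {G : Type*} [AddGroup G] [MeasurableSpace G]
    [MeasurableAdd G] [MeasurableNeg G] {μ : Measure G} [μ.IsAddLeftInvariant] [μ.IsNegInvariant]
    {f h : G → ℝ≥0∞} (hh : Measurable h) (x : G)
    (hfh : ∀ᵐ y ∂μ, f y ≤ h y ∨ f y ≤ h (x - y)) : ∫⁻ y, f y ∂μ ≤ 2 * ∫⁻ y, h y ∂μ := by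
  calc ∫⁻ y, f y ∂μ ≤ ∫⁻ y, h y + h (x - y) ∂μ := lintegral_mono_ae <| hfh.mono fun y hy =>
        hy.elim (fun hy => hy.trans le_self_add) (fun hy => hy.trans le_add_self)
    _ = 2 * ∫⁻ y, h y ∂μ := by rw [lintegral_add_left hh, lintegral_sub_left_eq_self, two_mul]

theorem rpow_lintegral_norm_gt_le {E : Type*} [NormedAddCommGroup E] [MeasurableSpace E]
    [OpensMeasurableSpace E] {μ : Measure E} {s ρ : ℝ} (hp : 0 < p) (hs : 0 ≤ s) (hρ : 0 < ρ)
    (f : E → ℝ≥0∞) :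
    (∫⁻ x in {x | ρ < ‖x‖}, f x ^ p ∂μ) ^ (1 / p) ≤ ENNReal.ofReal (ρ ^ (-s)) *
      (∫⁻ x in {x | ρ < ‖x‖}, (ENNReal.ofReal (‖x‖ ^ s) * f x) ^ p ∂μ) ^ (1 / p) := by
  rw [← rpow_lintegral_rpow_const_mul hp ENNReal.ofReal_ne_top]
  gcongr ?_ ^ (1 / p)
  refine setLIntegral_mono' (measurableSet_lt measurable_const measurable_norm) fun x hx => ?_
  have hx' : ρ < ‖x‖ := hx
  have hone : 1 ≤ ρ ^ (-s) * ‖x‖ ^ s := by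
    rw [Real.rpow_neg hρ.le, inv_mul_eq_div, one_le_div (by positivity)]
    gcongr
  gcongr ?_ ^ p
  rw [← mul_assoc, ← ENNReal.ofReal_mul (by positivity)]
  exact le_mul_of_one_le_left zero_le (ENNReal.one_le_ofReal.2 hone)

end Lebesgue

section DilatedConvolution

variable {E : Type*} [NormedAddCommGroup E] [NormedSpace ℝ E] [MeasurableSpace E]

/-- The superposition of dilated convolutions `η ↦ ∫ (κ ∗ F)(tη) dτ(t)`, the scalar majorant of the
nonlinear part of `R_β`; `τ` weighs the dilations and `κ` is the measure convolved with `F`. -/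
noncomputable def dilatedConv (τ : Measure ℝ) (κ : Measure E) (F : E → ℝ≥0∞) (η : E) : ℝ≥0∞ :=
  ∫⁻ t, ∫⁻ y, F (t • η - y) ∂κ ∂τ

variable [BorelSpace E] {τ : Measure ℝ} {κ : Measure E} {F : E → ℝ≥0∞}

theorem measurable_dilatedConv [SecondCountableTopology E] [SFinite τ] [SFinite κ]
    (hF : Measurable F) : Measurable (dilatedConv τ κ F) := by
  have h : Measurable fun z : (E × ℝ) × E => F (z.1.2 • z.1.1 - z.2) := by fun_prop
  exact h.lintegral_prod_right'.lintegral_prod_right'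

variable [FiniteDimensional ℝ E] {μ : Measure E} [μ.IsAddHaarMeasure]

theorem lintegral_comp_smul_le {t : ℝ} (ht : 1 ≤ t) (f : E → ℝ≥0∞) :
    ∫⁻ x, f (t • x) ∂μ ≤ ∫⁻ x, f x ∂μ := by
  have ht₀ : t ≠ 0 := by linarith
  calc ∫⁻ x, f (t • x) ∂μ = ∫⁻ x, f x ∂μ.map (t • ·) :=
        ((MeasurableEquiv.smul₀ t ht₀).measurableEmbedding.lintegral_map f).symm
    _ = ENNReal.ofReal |(t ^ Module.finrank ℝ E)⁻¹| * ∫⁻ x, f x ∂μ := by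
        rw [Measure.map_addHaar_smul μ ht₀, lintegral_smul_measure, smul_eq_mul]
    _ ≤ ∫⁻ x, f x ∂μ := by
        refine mul_le_of_le_one_left' (ENNReal.ofReal_le_one.2 ?_)
        rw [abs_of_nonneg (by positivity)]
        exact inv_le_one_of_one_le₀ (one_le_pow₀ ht)

theorem lintegral_dilatedConv_rpow_le [SFinite τ] [SFinite κ] {p : ℝ} (hp : 1 ≤ p)
    (hτ : ∀ᵐ t ∂τ, 1 ≤ t) (hF : Measurable F) :
    ∫⁻ η, dilatedConv τ κ F η ^ p ∂μ ≤ τ univ ^ p * (κ univ ^ p * ∫⁻ x, F x ^ p ∂μ) := by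
  have h : Measurable fun z : (E × ℝ) × E => F (z.1.2 • z.1.1 - z.2) := by fun_prop
  refine lintegral_rpow_lintegral_le hp h.lintegral_prod_right' (hτ.mono fun t ht => ?_)
  refine lintegral_rpow_lintegral_le hp (by fun_prop) (ae_of_all _ fun y => ?_)
  calc ∫⁻ η, F (t • η - y) ^ p ∂μ ≤ ∫⁻ x, F (x - y) ^ p ∂μ :=
        lintegral_comp_smul_le ht fun x => F (x - y) ^ p
    _ = ∫⁻ x, F x ^ p ∂μ := lintegral_sub_right_eq_self (fun x => F x ^ p) y

theorem rpow_lintegral_add_dilatedConv_le [SFinite τ] [SFinite κ] {p b : ℝ}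
    (hp : 1 ≤ p) (hb : 1 ≤ b) (hτ : ∀ᵐ t ∂τ, 1 ≤ t) {F : E → ℝ≥0∞} (hF : Measurable F)
    {C₁ C₂ : ℝ≥0∞} (hC₁ : C₁ ≠ ⊤) (hC₂ : C₂ ≠ ⊤) :
    (∫⁻ η, (C₁ * F (b • η) + C₂ * dilatedConv τ κ F η) ^ p ∂μ) ^ (1 / p)
      ≤ (C₁ + C₂ * (τ univ * κ univ)) * (∫⁻ x, F x ^ p ∂μ) ^ (1 / p) := by
  have hp₀ : 0 < p := by linarith
  have hconv : (∫⁻ η, dilatedConv τ κ F η ^ p ∂μ) ^ (1 / p)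
      ≤ τ univ * κ univ * (∫⁻ x, F x ^ p ∂μ) ^ (1 / p) := by
    calc (∫⁻ η, dilatedConv τ κ F η ^ p ∂μ) ^ (1 / p)
        ≤ (τ univ ^ p * (κ univ ^ p * ∫⁻ x, F x ^ p ∂μ)) ^ (1 / p) := by
          gcongr
          exact lintegral_dilatedConv_rpow_le hp hτ hF
      _ = τ univ * κ univ * (∫⁻ x, F x ^ p ∂μ) ^ (1 / p) := by
          rw [← mul_assoc, ← ENNReal.mul_rpow_of_nonneg _ _ hp₀.le,
            ENNReal.mul_rpow_of_nonneg _ _ (by positivity), ← ENNReal.rpow_mul,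
            mul_one_div_cancel hp₀.ne', ENNReal.rpow_one]
  have hdil := measurable_dilatedConv (τ := τ) (κ := κ) hF
  refine (ENNReal.lintegral_Lp_add_le (f := fun η => C₁ * F (b • η)) (by fun_prop)
    (hdil.const_mul C₂).aemeasurable hp).trans ?_
  rw [rpow_lintegral_rpow_const_mul hp₀ hC₁, rpow_lintegral_rpow_const_mul hp₀ hC₂, add_mul,
    mul_assoc C₂]
  gcongr C₁ * ?_ ^ (1 / p) + C₂ * ?_
  exact lintegral_comp_smul_le hb fun x => F x ^ p

end DilatedConvolution

section Leray

variable {d : ℕ}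

theorem norm_toC (η : Ed d) : ‖toC η‖ = ‖η‖ := by
  simp [toC, EuclideanSpace.norm_eq]

theorem pairC_eq_inner (η : Ed d) (v : EdC d) : pairC η v = inner ℂ (toC η) v := by
  simp [pairC, toC, PiLp.inner_apply, mul_comm]

theorem norm_pairC_le (η : Ed d) (v : EdC d) : ‖pairC η v‖ ≤ ‖η‖ * ‖v‖ := by
  rw [pairC_eq_inner, ← norm_toC]
  exact norm_inner_le_norm _ _

theorem lerayC_eq_starProjection (η : Ed d) (v : EdC d) :
    lerayC η v = (Submodule.span ℂ {toC η})ᗮ.starProjection v := by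
  rw [Submodule.starProjection_orthogonal_val, Submodule.starProjection_singleton,
    ← pairC_eq_inner, norm_toC]
  ext i
  simp [lerayC, toC]

theorem norm_lerayC_le (η : Ed d) (v : EdC d) : ‖lerayC η v‖ ≤ ‖v‖ := by
  rw [lerayC_eq_starProjection]
  exact Submodule.norm_starProjection_apply_le _ v

theorem norm_renormKernelC_le (γ : ℝ) (ϑ : Ed d → EdC d) (η x : Ed d) {t : ℝ} (ht : 0 ≤ t) :
    ‖renormKernelC d γ ϑ η t x‖ ≤ t ^ (-(γ - d - 1)) * Real.exp (‖η‖ ^ γ * (1 - t ^ γ)) * ‖η‖ *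
      (‖ϑ x‖ * ‖ϑ (t • η - x)‖) := by
  rw [renormKernelC, norm_smul, norm_smul, Real.norm_of_nonneg (by positivity), mul_assoc _ ‖η‖,
    mul_comm ‖ϑ x‖, ← mul_assoc ‖η‖]
  gcongr
  · exact norm_pairC_le _ _
  · exact norm_lerayC_le _ _

end Leray

section Weights

variable {d : ℕ} {p q ν σ : ℝ}

theorem uWeight_nonneg (ν : ℝ) (x : Ed d) : 0 ≤ uWeight ν x := by
  unfold uWeight
  positivity

theorem measurable_uWeight (ν : ℝ) : Measurable (uWeight ν : Ed d → ℝ) := by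
  unfold uWeight
  fun_prop

/-- The weight `e^{|x|} (1 + |x|)^{-σ}` that the kernel estimate leaves on the shorter of the two
vectors of the convolution. -/
noncomputable def lowWeight (σ : ℝ) (x : Ed d) : ℝ := Real.exp ‖x‖ * (1 + ‖x‖) ^ (-σ)

theorem lowWeight_nonneg (σ : ℝ) (x : Ed d) : 0 ≤ lowWeight σ x := by
  unfold lowWeight
  positivity

theorem measurable_lowWeight (σ : ℝ) : Measurable (lowWeight σ : Ed d → ℝ) := by
  unfold lowWeight
  fun_prop

theorem lowWeight_eq_mul_uWeight (σ ν : ℝ) {x : Ed d} (hx : x ≠ 0) :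
    lowWeight σ x = ‖x‖ ^ (-ν) * (1 + ‖x‖) ^ (-σ) * uWeight ν x := by
  have h : ‖x‖ ^ (-ν) * ‖x‖ ^ ν = 1 := by
    rw [← Real.rpow_add (norm_pos_iff.2 hx), neg_add_cancel, Real.rpow_zero]
  rw [lowWeight, uWeight]
  linear_combination (-Real.exp ‖x‖ * (1 + ‖x‖) ^ (-σ)) * h

/-- The weighted modulus `|g| w` as an extended nonnegative function; for `w ≥ 0`, its `L^p` norm
is `wLpNorm w p g`. -/
noncomputable def weightedAbs (w g : Ed d → ℝ) (x : Ed d) : ℝ≥0∞ := ENNReal.ofReal (|g x| * w x)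

theorem measurable_weightedAbs {w g : Ed d → ℝ} (hw : Measurable w) (hg : Measurable g) :
    Measurable (weightedAbs w g) := by
  unfold weightedAbs
  fun_prop

theorem wLpNorm_eq_rpow_lintegral_weightedAbs {w : Ed d → ℝ} (hw : ∀ x, 0 ≤ w x) (hp : 0 ≤ p)
    (g : Ed d → ℝ) : wLpNorm w p g = (∫⁻ x, weightedAbs w g x ^ p) ^ (1 / p) := by
  unfold wLpNorm weightedAbs
  congr 1
  refine lintegral_congr fun x => ?_
  rw [ENNReal.ofReal_rpow_of_nonneg (mul_nonneg (abs_nonneg _) (hw x)) hp,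
    Real.mul_rpow (abs_nonneg _) (hw x)]

theorem lintegral_norm_rpow_mul_one_add_norm_rpow_lt_top (hd : 0 < d) (hq : 0 < q)
    (hν : ν * q < d) (hνσ : d < (ν + σ) * q) :
    ∫⁻ y : Ed d, ENNReal.ofReal (‖y‖ ^ (-ν) * (1 + ‖y‖) ^ (-σ)) ^ q < ⊤ := by
  have : Nonempty (Fin d) := ⟨⟨0, hd⟩⟩
  have hint := integrable_norm_rpow_mul_one_add_norm_rpow (volume : Measure (Ed d))
    (a := -ν * q) (b := -σ * q) (by rw [finrank_euclideanSpace_fin]; linarith)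
    (by rw [finrank_euclideanSpace_fin]; linarith)
  convert hint.lintegral_lt_top using 3 with y
  rw [ENNReal.ofReal_rpow_of_nonneg (by positivity) hq.le,
    Real.mul_rpow (by positivity) (by positivity), ← Real.rpow_mul (by positivity),
    ← Real.rpow_mul (by positivity)]

theorem exists_lintegral_weightedAbs_lowWeight_le (hd : 0 < d) (hpq : p.HolderConjugate q)
    (hν : ν * q < d) (hνσ : d < (ν + σ) * q) :
    ∃ C : ℝ≥0∞, C ≠ ⊤ ∧ ∀ g : Ed d → ℝ, Measurable g →
      ∫⁻ y, weightedAbs (lowWeight σ) g y ≤ C * wLpNorm (uWeight ν) p g := by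
  have : Nonempty (Fin d) := ⟨⟨0, hd⟩⟩
  refine ⟨(∫⁻ y : Ed d, ENNReal.ofReal (‖y‖ ^ (-ν) * (1 + ‖y‖) ^ (-σ)) ^ q) ^ (1 / q),
    ENNReal.rpow_ne_top_of_nonneg hpq.symm.one_div_nonneg
      (lintegral_norm_rpow_mul_one_add_norm_rpow_lt_top hd hpq.symm.pos hν hνσ).ne,
    fun g hg => ?_⟩
  rw [wLpNorm_eq_rpow_lintegral_weightedAbs (uWeight_nonneg ν) hpq.nonneg]
  refine le_trans (lintegral_mono_ae ?_) (ENNReal.lintegral_mul_le_Lp_mul_Lq volume hpq.symm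
    (by fun_prop) (measurable_weightedAbs (measurable_uWeight ν) hg).aemeasurable)
  filter_upwards [Measure.ae_ne volume (0 : Ed d)] with y hy
  rw [Pi.mul_apply, weightedAbs, weightedAbs, ← ENNReal.ofReal_mul (by positivity),
    lowWeight_eq_mul_uWeight σ ν hy, mul_left_comm]

/-- The measure `(t - 1)^{-θ} dt` on `(1, b]`. -/
noncomputable def timeMeasure (θ b : ℝ) : Measure ℝ :=
  (volume.restrict (Ioc 1 b)).withDensity fun t => ENNReal.ofReal ((t - 1) ^ (-θ))

instance (θ b : ℝ) : SFinite (timeMeasure θ b) := by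
  unfold timeMeasure
  infer_instance

theorem timeMeasure_univ_lt_top {θ b : ℝ} (hθ : θ < 1) (hb : 1 ≤ b) : timeMeasure θ b univ < ⊤ := by
  rw [timeMeasure, withDensity_apply _ MeasurableSet.univ, Measure.restrict_univ]
  exact lintegral_Ioc_sub_one_rpow_lt_top hθ hb

theorem ae_one_le_timeMeasure (θ b : ℝ) : ∀ᵐ t ∂timeMeasure θ b, 1 ≤ t := by
  refine (withDensity_absolutelyContinuous _ _).ae_le ?_
  filter_upwards [ae_restrict_mem measurableSet_Ioc] with t ht using ht.1.le

end Weights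

section Renormalization

variable {d : ℕ} {γ β ν s θ σ : ℝ}

/-- The constant `C` controls the kernel of the nonlinear part of `R_β` on the tail `|η| ≥ β`:
measured with the tail weight `|η|^s u_ν(η)`, its convolution of a vector `y` with a longer
vector `z` costs at most `lowWeight σ y` and `u_ν(z)`. -/
def KernelWeightBound (d : ℕ) (γ β ν s θ σ C : ℝ) : Prop :=
  ∀ (η y z : Ed d) (t : ℝ), β ≤ ‖η‖ → t ∈ Ioc 1 β⁻¹ → y + z = t • η → ‖y‖ ≤ ‖z‖ →
    ‖η‖ ^ s * uWeight ν η * (t ^ (-(γ - d - 1)) * Real.exp (‖η‖ ^ γ * (1 - t ^ γ)) * ‖η‖)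
      ≤ C * (t - 1) ^ (-θ) * lowWeight σ y * uWeight ν z

theorem exists_kernelWeightBound (d : ℕ) (ν : ℝ) (hβ : 0 < β) (hγ : 1 ≤ γ) (hθ₀ : 0 ≤ θ)
    (hθ₁ : θ ≤ 1) (hσ : 0 ≤ σ) (hs : s + 1 + σ = γ * θ) :
    ∃ C : ℝ, 0 ≤ C ∧ KernelWeightBound d γ β ν s θ σ C := by
  obtain ⟨C, hC, hbound⟩ := exists_kernel_weight_le hβ hγ hθ₀ hθ₁ hσ hs ν (-(γ - d - 1))
  refine ⟨C, hC, fun η y z t hη ht hyz hle => ?_⟩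
  refine hbound ‖η‖ t ‖y‖ ‖z‖ hη ht (norm_nonneg y) hle ?_
  calc t * ‖η‖ = ‖y + z‖ := by
        rw [hyz, norm_smul, Real.norm_of_nonneg (zero_le_one.trans ht.1.le)]
    _ ≤ ‖y‖ + ‖z‖ := norm_add_le y z

variable {C : ℝ} {ϑ : Ed d → EdC d} {g : Ed d → ℝ}

theorem KernelWeightBound.ofReal_mul_le (hC₀ : 0 ≤ C) (hC : KernelWeightBound d γ β ν s θ σ C)
    {η y z : Ed d} {t : ℝ} (hη : β ≤ ‖η‖) (ht : t ∈ Ioc 1 β⁻¹) (hyz : y + z = t • η)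
    (hle : ‖y‖ ≤ ‖z‖) (hy : ‖ϑ y‖ ≤ g y) (hz : ‖ϑ z‖ ≤ g z) :
    ENNReal.ofReal (‖η‖ ^ s * uWeight ν η *
        (t ^ (-(γ - d - 1)) * Real.exp (‖η‖ ^ γ * (1 - t ^ γ)) * ‖η‖ * (‖ϑ y‖ * ‖ϑ z‖)))
      ≤ ENNReal.ofReal (C * (t - 1) ^ (-θ)) *
        (weightedAbs (lowWeight σ) g y * weightedAbs (uWeight ν) g z) := by
  have hCt : 0 ≤ C * (t - 1) ^ (-θ) := mul_nonneg hC₀ (Real.rpow_nonneg (sub_nonneg.2 ht.1.le) _)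
  have hlow := lowWeight_nonneg σ y
  have hu := uWeight_nonneg ν z
  have hy' : ‖ϑ y‖ ≤ |g y| := hy.trans (le_abs_self _)
  have hz' : ‖ϑ z‖ ≤ |g z| := hz.trans (le_abs_self _)
  rw [weightedAbs, weightedAbs, ← ENNReal.ofReal_mul (by positivity), ← ENNReal.ofReal_mul hCt]
  refine ENNReal.ofReal_le_ofReal ?_
  rw [← mul_assoc]
  calc ‖η‖ ^ s * uWeight ν η * (t ^ (-(γ - d - 1)) * Real.exp (‖η‖ ^ γ * (1 - t ^ γ)) * ‖η‖) *
        (‖ϑ y‖ * ‖ϑ z‖)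
      ≤ C * (t - 1) ^ (-θ) * lowWeight σ y * uWeight ν z * (|g y| * |g z|) := by
        refine mul_le_mul (hC η y z t hη ht hyz hle) (by gcongr) (by positivity) ?_
        positivity
    _ = C * (t - 1) ^ (-θ) * (|g y| * lowWeight σ y * (|g z| * uWeight ν z)) := by ring

theorem KernelWeightBound.lintegral_kernel_le (hC₀ : 0 ≤ C)
    (hC : KernelWeightBound d γ β ν s θ σ C) (hg : Measurable g) (hϑ : ∀ᵐ x, ‖ϑ x‖ ≤ g x)
    {η : Ed d} {t : ℝ} (hη : β ≤ ‖η‖) (ht : t ∈ Ioc 1 β⁻¹) :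
    ENNReal.ofReal (‖η‖ ^ s * uWeight ν η) * ∫⁻ x, ‖renormKernelC d γ ϑ η t x‖ₑ
      ≤ 2 * (ENNReal.ofReal (C * (t - 1) ^ (-θ)) *
        ∫⁻ y, weightedAbs (lowWeight σ) g y * weightedAbs (uWeight ν) g (t • η - y)) := by
  have hlow := measurable_weightedAbs (measurable_lowWeight σ) hg
  have hu := measurable_weightedAbs (measurable_uWeight ν) hg
  rw [← lintegral_const_mul' _ _ ENNReal.ofReal_ne_top,
    ← lintegral_const_mul' _ _ ENNReal.ofReal_ne_top]
  refine lintegral_le_two_mul_of_le_or_le (by fun_prop) (t • η) ?_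
  filter_upwards [hϑ, (quasiMeasurePreserving_sub_left volume (t • η)).ae hϑ] with x hx hx'
  have hkernel : ENNReal.ofReal (‖η‖ ^ s * uWeight ν η) * ‖renormKernelC d γ ϑ η t x‖ₑ
      ≤ ENNReal.ofReal (‖η‖ ^ s * uWeight ν η * (t ^ (-(γ - d - 1)) *
        Real.exp (‖η‖ ^ γ * (1 - t ^ γ)) * ‖η‖ * (‖ϑ x‖ * ‖ϑ (t • η - x)‖))) := by
    have huη := uWeight_nonneg ν η
    rw [← ofReal_norm, ← ENNReal.ofReal_mul (by positivity)]
    gcongr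
    exact norm_renormKernelC_le γ ϑ η x (zero_le_one.trans ht.1.le)
  rcases le_total ‖x‖ ‖t • η - x‖ with hle | hle
  · exact .inl (hkernel.trans (hC.ofReal_mul_le hC₀ hη ht (add_sub_cancel _ _) hle hx hx'))
  · rw [mul_comm ‖ϑ x‖] at hkernel
    rw [sub_sub_cancel]
    exact .inr (hkernel.trans (hC.ofReal_mul_le hC₀ hη ht (sub_add_cancel _ _) hle hx' hx))

theorem KernelWeightBound.enorm_integral_le (hC₀ : 0 ≤ C)
    (hC : KernelWeightBound d γ β ν s θ σ C) (hg : Measurable g) (hϑ : ∀ᵐ x, ‖ϑ x‖ ≤ g x)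
    {η : Ed d} (hη : β ≤ ‖η‖) :
    ENNReal.ofReal (‖η‖ ^ s * uWeight ν η) *
        ‖∫ t in Ioc 1 β⁻¹, ∫ x, renormKernelC d γ ϑ η t x‖ₑ
      ≤ 2 * ENNReal.ofReal C * dilatedConv (timeMeasure θ β⁻¹)
        (volume.withDensity (weightedAbs (lowWeight σ) g)) (weightedAbs (uWeight ν) g) η := by
  have hlow := measurable_weightedAbs (measurable_lowWeight σ) hg
  have hu := measurable_weightedAbs (measurable_uWeight ν) hg
  have hconv : Measurable fun t : ℝ =>
      ∫⁻ y, weightedAbs (lowWeight σ) g y * weightedAbs (uWeight ν) g (t • η - y) := by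
    have h : Measurable fun z : ℝ × Ed d =>
      weightedAbs (lowWeight σ) g z.2 * weightedAbs (uWeight ν) g (z.1 • η - z.2) := by fun_prop
    exact h.lintegral_prod_right'
  calc ENNReal.ofReal (‖η‖ ^ s * uWeight ν η) *
        ‖∫ t in Ioc 1 β⁻¹, ∫ x, renormKernelC d γ ϑ η t x‖ₑ
      ≤ ENNReal.ofReal (‖η‖ ^ s * uWeight ν η) *
          ∫⁻ t in Ioc 1 β⁻¹, ∫⁻ x, ‖renormKernelC d γ ϑ η t x‖ₑ := by
        gcongr
        exact (enorm_integral_le_lintegral_enorm _).trans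
          (lintegral_mono fun t => enorm_integral_le_lintegral_enorm _)
    _ = ∫⁻ t in Ioc 1 β⁻¹, ENNReal.ofReal (‖η‖ ^ s * uWeight ν η) *
          ∫⁻ x, ‖renormKernelC d γ ϑ η t x‖ₑ :=
        (lintegral_const_mul' _ _ ENNReal.ofReal_ne_top).symm
    _ ≤ ∫⁻ t in Ioc 1 β⁻¹, 2 * (ENNReal.ofReal (C * (t - 1) ^ (-θ)) *
          ∫⁻ y, weightedAbs (lowWeight σ) g y * weightedAbs (uWeight ν) g (t • η - y)) :=
        setLIntegral_mono' measurableSet_Ioc fun t ht => hC.lintegral_kernel_le hC₀ hg hϑ hη ht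
    _ = 2 * ENNReal.ofReal C * dilatedConv (timeMeasure θ β⁻¹)
          (volume.withDensity (weightedAbs (lowWeight σ) g)) (weightedAbs (uWeight ν) g) η := by
        have hspace (t : ℝ) := lintegral_withDensity_eq_lintegral_mul volume hlow
          (show Measurable fun y => weightedAbs (uWeight ν) g (t • η - y) by fun_prop)
        simp only [Pi.mul_apply] at hspace
        simp only [dilatedConv, timeMeasure, hspace]
        rw [lintegral_withDensity_eq_lintegral_mul _ (by fun_prop) hconv,
          ← lintegral_const_mul' _ _ (by finiteness)]
        refine lintegral_congr fun t => ?_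
        rw [ENNReal.ofReal_mul hC₀, Pi.mul_apply]
        ring

theorem exists_linear_weight_le (hβ₀ : 0 < β) (hβ₁ : β < 1) (hγ : 0 < γ) (hs : 0 ≤ s) (ν : ℝ) :
    ∃ C : ℝ, 0 ≤ C ∧ ∀ N : ℝ, 0 ≤ N →
      N ^ s * (Real.exp N * N ^ ν) * Real.exp (N ^ γ * (1 - β ^ (-γ)))
        ≤ C * (Real.exp (β⁻¹ * N) * (β⁻¹ * N) ^ ν) := by
  have hk : 1 < β ^ (-γ) := Real.one_lt_rpow_of_pos_of_lt_one_of_neg hβ₀ hβ₁ (by linarith)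
  refine ⟨(s / γ / (β ^ (-γ) - 1)) ^ (s / γ) * β ^ ν, ?_, fun N hN => ?_⟩
  · have := sub_pos.2 hk
    positivity
  have hdecay := rpow_mul_exp_rpow_mul_one_sub_le (γ := γ) hN (div_nonneg hs hγ.le) hk
  rw [mul_div_cancel₀ _ hγ.ne'] at hdecay
  have hN_le : N ≤ β⁻¹ * N := le_mul_of_one_le_left hN ((one_le_inv₀ hβ₀).2 hβ₁.le)
  have hN_rpow : N ^ ν = β ^ ν * (β⁻¹ * N) ^ ν := by
    rw [← Real.mul_rpow hβ₀.le (by positivity), mul_inv_cancel_left₀ hβ₀.ne']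
  calc N ^ s * (Real.exp N * N ^ ν) * Real.exp (N ^ γ * (1 - β ^ (-γ)))
      = N ^ s * Real.exp (N ^ γ * (1 - β ^ (-γ))) * (Real.exp N * N ^ ν) := by ring
    _ ≤ (s / γ / (β ^ (-γ) - 1)) ^ (s / γ) * (Real.exp (β⁻¹ * N) * N ^ ν) := by gcongr
    _ = (s / γ / (β ^ (-γ) - 1)) ^ (s / γ) * β ^ ν * (Real.exp (β⁻¹ * N) * (β⁻¹ * N) ^ ν) := by
        rw [hN_rpow]
        ring

theorem exists_enorm_linear_le (d : ℕ) (hβ₀ : 0 < β) (hβ₁ : β < 1) (hγ : 0 < γ) (hs : 0 ≤ s)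
    (ν c : ℝ) :
    ∃ C : ℝ, ∀ (g : Ed d → ℝ) (η : Ed d) (v : EdC d), ‖v‖ ≤ g (β⁻¹ • η) →
      ENNReal.ofReal (‖η‖ ^ s * uWeight ν η) *
          ‖(β ^ c * Real.exp (‖η‖ ^ γ * (1 - β ^ (-γ)))) • v‖ₑ
        ≤ ENNReal.ofReal C * weightedAbs (uWeight ν) g (β⁻¹ • η) := by
  obtain ⟨C, hC, hbound⟩ := exists_linear_weight_le hβ₀ hβ₁ hγ hs ν
  refine ⟨β ^ c * C, fun g η v hv => ?_⟩
  have hnorm : ‖β⁻¹ • η‖ = β⁻¹ * ‖η‖ := by rw [norm_smul, Real.norm_of_nonneg (by positivity)]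
  have hu := uWeight_nonneg ν η
  rw [weightedAbs, ← ofReal_norm, ← ENNReal.ofReal_mul (by positivity),
    ← ENNReal.ofReal_mul (by positivity)]
  refine ENNReal.ofReal_le_ofReal ?_
  rw [norm_smul, Real.norm_of_nonneg (by positivity), uWeight, uWeight, hnorm]
  calc ‖η‖ ^ s * (Real.exp ‖η‖ * ‖η‖ ^ ν) *
        (β ^ c * Real.exp (‖η‖ ^ γ * (1 - β ^ (-γ))) * ‖v‖)
      = β ^ c * (‖η‖ ^ s * (Real.exp ‖η‖ * ‖η‖ ^ ν) *
          Real.exp (‖η‖ ^ γ * (1 - β ^ (-γ)))) * ‖v‖ := by ring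
    _ ≤ β ^ c * (C * (Real.exp (β⁻¹ * ‖η‖) * (β⁻¹ * ‖η‖) ^ ν)) * |g (β⁻¹ • η)| := by
        have hv' : ‖v‖ ≤ |g (β⁻¹ • η)| := hv.trans (le_abs_self _)
        have := hbound ‖η‖ (norm_nonneg η)
        gcongr β ^ c * ?_ * ?_
    _ = β ^ c * C * (|g (β⁻¹ • η)| * (Real.exp (β⁻¹ * ‖η‖) * (β⁻¹ * ‖η‖) ^ ν)) := by ring

variable {p q : ℝ}

theorem exists_enorm_renormC_le (hβ₀ : 0 < β) (hβ₁ : β < 1) (hγ : 1 ≤ γ) (hθ : θ ≤ 1)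
    (hs₀ : 0 ≤ s) (hσ : 0 ≤ σ) (hs : s + 1 + σ = γ * θ) (d : ℕ) (ν : ℝ) :
    ∃ C₁ C₂ : ℝ≥0∞, C₁ ≠ ⊤ ∧ C₂ ≠ ⊤ ∧ ∀ (ϑ : Ed d → EdC d) (g : Ed d → ℝ), Measurable g →
      (∀ᵐ x, ‖ϑ x‖ ≤ g x) → ∀ᵐ η, β ≤ ‖η‖ →
        ENNReal.ofReal (‖η‖ ^ s * uWeight ν η) * ‖renormC d γ β ϑ η‖ₑ
          ≤ C₁ * weightedAbs (uWeight ν) g (β⁻¹ • η) + C₂ * dilatedConv (timeMeasure θ β⁻¹)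
            (volume.withDensity (weightedAbs (lowWeight σ) g)) (weightedAbs (uWeight ν) g) η := by
  have hθ₀ : 0 ≤ θ := nonneg_of_mul_nonneg_right (a := γ) (by linarith) (by linarith)
  obtain ⟨L, hL⟩ := exists_enorm_linear_le d hβ₀ hβ₁ (zero_lt_one.trans_le hγ) hs₀ ν (γ - d - 1)
  obtain ⟨C, hC₀, hC⟩ := exists_kernelWeightBound d ν hβ₀ hγ hθ₀ hθ hσ hs
  refine ⟨ENNReal.ofReal L, ENNReal.ofReal γ * (2 * ENNReal.ofReal C), by finiteness,
    by finiteness, fun ϑ g hg hϑ => ?_⟩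
  filter_upwards [(Measure.quasiMeasurePreserving_smul volume (inv_ne_zero hβ₀.ne')).ae hϑ]
    with η hη hβη
  have hIγ : ‖Complex.I * (γ : ℂ)‖ₑ = ENNReal.ofReal γ := by
    rw [← ofReal_norm, norm_mul, Complex.norm_I, one_mul, Complex.norm_real,
      Real.norm_of_nonneg (zero_le_one.trans hγ)]
  refine (mul_le_mul_right (enorm_add_le _ _) _).trans ?_
  rw [mul_add, enorm_smul (Complex.I * (γ : ℂ)), hIγ, mul_left_comm, mul_assoc (ENNReal.ofReal γ)]
  gcongr ?_ + _ * ?_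
  · exact hL g η _ hη
  · exact hC.enorm_integral_le hC₀ hg hϑ hβη

theorem exists_weighted_norm_renormC_le (hd : 0 < d) (hβ₀ : 0 < β) (hβ₁ : β < 1) (hγ : 1 ≤ γ)
    (hpq : p.HolderConjugate q) (hθ : θ < 1) (hs₀ : 0 ≤ s) (hs : s + 1 + σ = γ * θ)
    (hν : ν * q < d) (hνσ : d < (ν + σ) * q) (A : ℝ) :
    ∃ B : ℝ≥0∞, B ≠ ⊤ ∧ ∀ ϑ : Ed d → EdC d, MemRLBall d p ν A ϑ →
      (∫⁻ η in {η | β ≤ ‖η‖}, (ENNReal.ofReal (‖η‖ ^ s * uWeight ν η) *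
        ‖renormC d γ β ϑ η‖ₑ) ^ p) ^ (1 / p) ≤ B := by
  have hσ : 0 ≤ σ := nonneg_of_mul_nonneg_left (b := q) (by linarith) hpq.symm.pos
  obtain ⟨C₁, C₂, hC₁, hC₂, hpoint⟩ :=
    exists_enorm_renormC_le hβ₀ hβ₁ hγ hθ.le hs₀ hσ hs d ν
  obtain ⟨H, hH, hlow⟩ := exists_lintegral_weightedAbs_lowWeight_le hd hpq hν hνσ
  have hβ : 1 ≤ β⁻¹ := (one_le_inv₀ hβ₀).2 hβ₁.le
  have hτ := (timeMeasure_univ_lt_top hθ hβ).ne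
  refine ⟨(C₁ + C₂ * (timeMeasure θ β⁻¹ univ * (H * ENNReal.ofReal A))) * ENNReal.ofReal A,
    by finiteness, ?_⟩
  rintro ϑ ⟨-, g, hg, -, hgA, hϑ⟩
  have hu := measurable_weightedAbs (measurable_uWeight ν) hg
  have hset : MeasurableSet {η : Ed d | β ≤ ‖η‖} :=
    measurableSet_le measurable_const measurable_norm
  set κ : Measure (Ed d) := volume.withDensity (weightedAbs (lowWeight σ) g) with hκ
  have hκ_univ : κ univ ≤ H * ENNReal.ofReal A := by
    rw [hκ, withDensity_apply _ MeasurableSet.univ, Measure.restrict_univ]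
    exact (hlow g hg).trans (by gcongr)
  calc (∫⁻ η in {η | β ≤ ‖η‖}, (ENNReal.ofReal (‖η‖ ^ s * uWeight ν η) *
          ‖renormC d γ β ϑ η‖ₑ) ^ p) ^ (1 / p)
      ≤ (∫⁻ η, (C₁ * weightedAbs (uWeight ν) g (β⁻¹ • η) + C₂ * dilatedConv (timeMeasure θ β⁻¹)
          κ (weightedAbs (uWeight ν) g) η) ^ p) ^ (1 / p) := by
        refine ENNReal.rpow_le_rpow ?_ hpq.one_div_nonneg
        refine le_trans (lintegral_mono_ae ?_) (setLIntegral_le_lintegral _ _)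
        filter_upwards [ae_restrict_of_ae (hpoint ϑ g hg hϑ), ae_restrict_mem hset] with η h hη
        exact ENNReal.rpow_le_rpow (h hη) hpq.nonneg
    _ ≤ (C₁ + C₂ * (timeMeasure θ β⁻¹ univ * κ univ)) * wLpNorm (uWeight ν) p g := by
        rw [wLpNorm_eq_rpow_lintegral_weightedAbs (uWeight_nonneg ν) hpq.nonneg]
        exact rpow_lintegral_add_dilatedConv_le hpq.lt.le hβ (ae_one_le_timeMeasure θ β⁻¹) hu
          hC₁ hC₂
    _ ≤ (C₁ + C₂ * (timeMeasure θ β⁻¹ univ * (H * ENNReal.ofReal A))) * ENNReal.ofReal A := by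
        gcongr

theorem tailBound_of_weighted_norm_le {m : ℝ} (hp : 0 < p) (hm : 0 ≤ γ * m / p) (hβ : 0 < β)
    {B : ℝ≥0∞} (hB : B ≠ ⊤) {ϑ : Ed d → EdC d}
    (h : (∫⁻ η in {η | β ≤ ‖η‖}, (ENNReal.ofReal (‖η‖ ^ (γ * m / p) * uWeight ν η) *
      ‖ϑ η‖ₑ) ^ p) ^ (1 / p) ≤ B) {M : ℝ} (hM : B.toReal ≤ M) : tailBound d p ν γ m M β ϑ := by
  intro ρ hρ
  have hρ₀ : 0 < ρ := hβ.trans hρ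
  have hrw (η : Ed d) : ENNReal.ofReal (‖ϑ η‖ ^ p * uWeight ν η ^ p)
      = (ENNReal.ofReal (uWeight ν η) * ‖ϑ η‖ₑ) ^ p := by
    have hu := uWeight_nonneg ν η
    rw [← ofReal_norm, ← ENNReal.ofReal_mul hu, ENNReal.ofReal_rpow_of_nonneg (by positivity) hp.le,
      Real.mul_rpow hu (norm_nonneg _), mul_comm]
  simp_rw [hrw]
  calc (∫⁻ η in {η | ρ < ‖η‖}, (ENNReal.ofReal (uWeight ν η) * ‖ϑ η‖ₑ) ^ p) ^ (1 / p)
      ≤ ENNReal.ofReal (ρ ^ (-(γ * m / p))) * (∫⁻ η in {η | ρ < ‖η‖},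
          (ENNReal.ofReal (‖η‖ ^ (γ * m / p)) *
            (ENNReal.ofReal (uWeight ν η) * ‖ϑ η‖ₑ)) ^ p) ^ (1 / p) :=
        rpow_lintegral_norm_gt_le hp hm hρ₀ _
    _ ≤ ENNReal.ofReal (ρ ^ (-(γ * m / p))) * ENNReal.ofReal M := by
        gcongr
        refine le_trans ?_ (h.trans (ENNReal.le_ofReal_iff_toReal_le hB ?_ |>.2 hM))
        · simp_rw [← mul_assoc, ← ENNReal.ofReal_mul (Real.rpow_nonneg (norm_nonneg _) _)]
          gcongr
          exact fun hη => hρ.le.trans (le_of_lt hη)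
        · exact ENNReal.toReal_nonneg.trans hM
    _ = ENNReal.ofReal (M * ρ ^ (-(γ * m / p))) := by
        rw [← ENNReal.ofReal_mul (by positivity), mul_comm]

theorem renorm_invariant_equitight_set_general (d : ℕ) (hd : 0 < d) (γ p ν m : ℝ) (hp : 1 < p)
    (hν : ν < d * (p - 1) / p) (hm₀ : 0 ≤ γ * m / p)
    (hm : γ * m / p < γ - 1 + ν - d * (p - 1) / p) (β : ℝ) (hβ : β ∈ Ioo (0 : ℝ) 1) (A : ℝ) :
    ∃ M : ℝ, 0 < M ∧ ∀ ϑ : Ed d → EdC d, MemRLBall d p ν A ϑ →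
      tailBound d p ν γ m M β (renormC d γ β ϑ) := by
  have hγ : 1 < γ := by linarith
  have hp₀ : 0 < p := by linarith
  have hp₁ : 0 < p - 1 := by linarith
  obtain ⟨θ, hθ, hθ₁⟩ : ∃ θ, (γ * m / p + 1 + d * (p - 1) / p - ν) / γ < θ ∧ θ < 1 :=
    exists_between ((div_lt_one (by linarith)).2 (by linarith))
  rw [div_lt_iff₀' (by linarith)] at hθ
  have hq : (d : ℝ) * (p - 1) / p * p.conjExponent = d := by
    rw [Real.conjExponent]
    field_simp
  have hpq : p.HolderConjugate p.conjExponent := .conjExponent hp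
  obtain ⟨B, hB, hbound⟩ := exists_weighted_norm_renormC_le hd hβ.1 hβ.2 hγ.le hpq hθ₁ hm₀
    (σ := γ * θ - γ * m / p - 1) (ν := ν) (by ring)
    ((mul_lt_mul_of_pos_right hν hpq.symm.pos).trans_eq hq)
    (hq.symm.trans_lt (mul_lt_mul_of_pos_right (by linarith) hpq.symm.pos)) A
  exact ⟨B.toReal + 1, by positivity, fun ϑ hϑ =>
    tailBound_of_weighted_norm_le hp₀ hm₀ hβ.1 hB (hbound ϑ hϑ) (by simp)⟩

end Renormalization

section Exponents

variable {d p r ν κ γ m : ℝ}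

theorem scaling_exponent_nonneg (hp : 0 < p) (hr : r ≠ 0) (hγ : γ ≠ 0)
    (hm : m = p * (r - 1) / r - p / γ * (κ + 1 + ν) - d * (r - p) / (r * γ))
    (h : 0 ≤ γ * p * (r - 1) / r - d * (r - p) / r - p * (ν + κ + 1)) : 0 ≤ γ * m / p := by
  have hγm : γ * m = γ * p * (r - 1) / r - d * (r - p) / r - p * (ν + κ + 1) := by
    rw [hm]
    field_simp
    ring
  exact div_nonneg (h.trans_eq hγm.symm) hp.le

theorem scaling_exponent_lt (hd : d ≠ 0) (hp : p ≠ 0) (hr : 0 < r) (hγ : 0 < γ)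
    (hscale : 1 / r = 2 / p + (2 * ν + κ) / d - 1)
    (hm : m = p * (r - 1) / r - p / γ * (κ + 1 + ν) - d * (r - p) / (r * γ)) :
    γ * m / p < γ - 1 + ν - d * (p - 1) / p := by
  have hκ : κ = d / r - 2 * d / p - 2 * ν + d := by
    field_simp at hscale ⊢
    linarith
  calc γ * m / p = γ - 1 + ν - d * (p - 1) / p - γ / r := by
        rw [hm, hκ]
        field_simp
        ring
    _ < γ - 1 + ν - d * (p - 1) / p := sub_lt_self _ (by positivity)

end Exponents

/-- invariance of an equitight subset of the invariant ball. -/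
theorem renorm_invariant_equitight_set
    (d : ℕ) (hd : 2 ≤ d) (γ : ℝ) (hγ : 1 < γ) (p r ν κ : ℝ)
    (hp : 1 < p) (hr : 1 < r)
    (h1 : 1 / r = 2 / p + (2 * ν + κ) / d - 1)
    (h2 : κ < d / r)
    (h3 : (d - 1) / 2 * (1 - 2 / p) < ν)
    (h4 : ν < d * (p - 1) / p)
    (h5 : p ≤ 2 * r)
    (h6 : 0 < max ν κ)
    (h7 : (d - 1) * (1 / r - 1 / p) ≤ ν + κ)
    (h8 : max 0 (d + p * ((γ - d - 1) + ν)) < d * (r - p) / r + p * (ν + κ + 1))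
    (h9 : d * (r - p) / r + p * (ν + κ + 1) < γ * p * (r - 1) / r)
    (h10 : γ < γ * p * (r - 1) / r - d * (r - p) / r - p * (ν + κ + 1))
    (h11 : r / (r - 1) < p)
    (m : ℝ) (hm : m = p * (r - 1) / r - p / γ * (κ + 1 + ν) - d * (r - p) / (r * γ))
    (β : ℝ) (hβ : β ∈ Set.Ioo (0 : ℝ) 1)
    (A : ℝ) (hA : 0 < A)
    (hinv : ∀ ϑ : Ed d → EdC d, MemRLBall d p ν A ϑ → MemRLBall d p ν A (renormC d γ β ϑ)) :
    ∃ M : ℝ, 0 < M ∧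
      ∀ ϑ : Ed d → EdC d, MemRLBall d p ν A ϑ → tailBound d p ν γ m M β ϑ →
        MemRLBall d p ν A (renormC d γ β ϑ) ∧ tailBound d p ν γ m M β (renormC d γ β ϑ) := by
  have hd₀ : (d : ℝ) ≠ 0 := Nat.cast_ne_zero.2 (by lia)
  have hp₀ : 0 < p := zero_lt_one.trans hp
  have hr₀ : 0 < r := zero_lt_one.trans hr
  have hγ₀ : 0 < γ := zero_lt_one.trans hγ
  obtain ⟨M, hM, h⟩ := renorm_invariant_equitight_set_general d (by lia) γ p ν m hp h4
    (scaling_exponent_nonneg hp₀ hr₀.ne' hγ₀.ne' hm (hγ₀.trans h10).le)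
    (scaling_exponent_lt hd₀ hp₀.ne' hr₀ hγ₀ h1 hm) β hβ A
  exact ⟨M, hM, fun ϑ hϑ _ => ⟨hinv ϑ hϑ, h ϑ hϑ⟩⟩
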